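/- arXiv:2305.08062 — 7 statements merged into one kernel-verified Lean document; each statement's English description precedes it below -/
import Mathlib

section
/- Fix x ∈ 𝒳 and suppose cluster common support holds at x, i.e., for every c ∈ 𝒞, π(c|x) > 0 implies π₀(c|x) > 0. Then for every function G : 𝒞 → ℝ, Σ_a π₀(a|x) · w(x, φ(x,a)) · G(φ(x,a)) = Σ_a π(a|x) · G(φ(x,a)). -/
open Finset

/-- The probability that a policy `pol` on a finite action set puts on the
cluster `c` under the clustering `φ` (for a fixed context). -/
noncomputable def clusterProb {A C : Type*} [Fintype A] [DecidableEq C]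
    (pol : A → ℝ) (φ : A → C) (c : C) : ℝ :=
  ∑ a ∈ univ.filter (fun a => φ a = c), pol a

/-- The cluster importance weight `w(x,c) = π(c|x) / π₀(c|x)` (for a fixed
context), with the convention `t / 0 = 0`. -/
noncomputable def clusterWeight {A C : Type*} [Fintype A] [DecidableEq C]
    (π₀ π : A → ℝ) (φ : A → C) (c : C) : ℝ :=
  clusterProb π φ c / clusterProb π₀ φ c

section

variable {A C : Type*} [Fintype A] [DecidableEq C]

lemma clusterProb_nonneg {pol : A → ℝ} (hpol : ∀ a, 0 ≤ pol a) (φ : A → C) (c : C) :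
    0 ≤ clusterProb pol φ c :=
  sum_nonneg fun a _ ↦ hpol a

lemma sum_mul_comp_eq_sum_clusterProb_mul (pol : A → ℝ) (φ : A → C) (F : C → ℝ) :
    ∑ a, pol a * F (φ a) = ∑ c ∈ univ.image φ, clusterProb pol φ c * F c := by
  have sum_over_cluster (c : C) :
      ∑ a with φ a = c, pol a * F (φ a) = clusterProb pol φ c * F c := by
    rw [clusterProb, sum_mul]
    exact sum_congr rfl fun a ha ↦ by rw [(mem_filter.mp ha).2]
  calc ∑ a, pol a * F (φ a)
      = ∑ c ∈ univ.image φ, ∑ a with φ a = c, pol a * F (φ a) :=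
        (sum_fiberwise_of_maps_to (fun a ha ↦ mem_image_of_mem φ ha) _).symm
    _ = ∑ c ∈ univ.image φ, clusterProb pol φ c * F c :=
        sum_congr rfl fun c _ ↦ sum_over_cluster c

lemma clusterProb_mul_clusterWeight {π₀ π : A → ℝ} {φ : A → C} {c : C}
    (hsupp : clusterProb π₀ φ c = 0 → clusterProb π φ c = 0) :
    clusterProb π₀ φ c * clusterWeight π₀ π φ c = clusterProb π φ c :=
  mul_div_cancel_of_imp' hsupp

theorem cluster_importance_weighting_unbiased_general {π₀ π : A → ℝ} {φ : A → C}
    (hsupp : ∀ c, clusterProb π₀ φ c = 0 → clusterProb π φ c = 0) (G : C → ℝ) :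
    ∑ a, π₀ a * clusterWeight π₀ π φ (φ a) * G (φ a) = ∑ a, π a * G (φ a) :=
  calc ∑ a, π₀ a * clusterWeight π₀ π φ (φ a) * G (φ a)
      = ∑ a, π₀ a * (clusterWeight π₀ π φ (φ a) * G (φ a)) := by
        simp only [mul_assoc]
    _ = ∑ c ∈ univ.image φ, clusterProb π₀ φ c * (clusterWeight π₀ π φ c * G c) :=
        sum_mul_comp_eq_sum_clusterProb_mul π₀ φ fun c ↦ clusterWeight π₀ π φ c * G c
    _ = ∑ c ∈ univ.image φ, clusterProb π φ c * G c :=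
        sum_congr rfl fun c _ ↦ by rw [← mul_assoc, clusterProb_mul_clusterWeight (hsupp c)]
    _ = ∑ a, π a * G (φ a) := (sum_mul_comp_eq_sum_clusterProb_mul π φ G).symm

end

/-- Fixing a context `x`, under cluster common support at `x`, cluster importance weighting is unbiased for any function `G` of the cluster:
`∑ a, π₀(a|x) · w(x, φ(x,a)) · G(φ(x,a)) = ∑ a, π(a|x) · G(φ(x,a))`. -/
theorem cluster_importance_weighting_unbiased
    {X A C : Type*} [Fintype X] [Fintype A] [Fintype C]
    [Nonempty X] [Nonempty A] [Nonempty C] [DecidableEq C]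
    (π₀ π : X → A → ℝ)
    (hπ₀ : ∀ x a, 0 ≤ π₀ x a) (hπ₀sum : ∀ x, ∑ a, π₀ x a = 1)
    (hπ : ∀ x a, 0 ≤ π x a) (hπsum : ∀ x, ∑ a, π x a = 1)
    (φ : X → A → C) (x : X)
    (hsupp : ∀ c : C, 0 < clusterProb (π x) (φ x) c → 0 < clusterProb (π₀ x) (φ x) c)
    (G : C → ℝ) :
    ∑ a, π₀ x a * clusterWeight (π₀ x) (π x) (φ x) (φ x a) * G (φ x a)
      = ∑ a, π x a * G (φ x a) := by
  exact cluster_importance_weighting_unbiased_general (fun c h₀ ↦ le_antisymm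
    (not_lt.mp fun h ↦ (hsupp c h).ne' h₀) (clusterProb_nonneg (hπ x) (φ x) c)) G
end

section
/- (Bias of OffCEM.) Assume common support: for all x, a, π(a|x) > 0 implies π₀(a|x) > 0. Let E := Σ_x p(x) Σ_a π₀(a|x) [ w(x, φ(x,a)) · (q(x,a) − f̂(x,a)) + f̂(x,π) ] be the expectation of the OffCEM estimator on a single logged sample. Then E − V(π) = (1/2) · Σ_x p(x) Σ_c π(c|x) Σ_{a} Σ_{b ≠ a, φ(x,a)=φ(x,b)=c} π₀(a|x,c) · π₀(b|x,c) · ( (q(x,a) − q(x,b)) − (f̂(x,a) − f̂(x,b)) ) · ( π(b|x,c)/π₀(b|x,c) − π(a|x,c)/π₀(a|x,c) ). -/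
open Finset

/-- Within-cluster conditional probability
`pol(a | c) = pol(a) · 𝟙{φ(a) = c} / pol(c)`, with the convention `t / 0 = 0`. -/
noncomputable def condProb {A C : Type*} [Fintype A] [DecidableEq C]
    (pol : A → ℝ) (φ : A → C) (a : A) (c : C) : ℝ :=
  pol a * (if φ a = c then (1 : ℝ) else 0) / clusterProb pol φ c

/-!
Conditioning on the context and the cluster, the importance-weighted part of the estimator averages
the residual `g = q - f̂` under `π₀(· | x, c)`, whereas the policy value averages it under
`π(· | x, c)`; both are weighted by `π(c | x)`, so the bias is a `π(c | x)`-average of differences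
of two conditional means. For probability vectors `u` and `v`, symmetrizing over pairs gives
`∑ u g - ∑ v g = (1/2) ∑ₐ ∑_b (g a - g b) (u a v b - u b v a)`, and common support lets one factor
`u a u b` out of the last bracket.
-/

theorem sum_sum_sub_mul_mul_sub_mul {ι R : Type*} [CommRing R] (s : Finset ι) (g u v : ι → R) :
    ∑ a ∈ s, ∑ b ∈ s, (g a - g b) * (u a * v b - u b * v a) =
      2 * ((∑ a ∈ s, u a * g a) * ∑ a ∈ s, v a - (∑ a ∈ s, v a * g a) * ∑ a ∈ s, u a) := by
  have expand (a b : ι) : (g a - g b) * (u a * v b - u b * v a) =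
      u a * g a * v b - v a * g a * u b - u a * (v b * g b) + v a * (u b * g b) := by
    ring
  simp only [expand, sum_add_distrib, sum_sub_distrib, ← sum_mul_sum]
  ring

theorem sum_sum_erase_mul_sub_mul_div_sub_div {ι K : Type*} [DecidableEq ι] [Field K]
    {s : Finset ι} {u v : ι → K} (hu : ∑ a ∈ s, u a = 1) (hv : ∑ a ∈ s, v a = 1)
    (hsupp : ∀ a ∈ s, u a = 0 → v a = 0) (g : ι → K) :
    ∑ a ∈ s, ∑ b ∈ s.erase a, u a * u b * (g a - g b) * (v b / u b - v a / u a) =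
      2 * (∑ a ∈ s, u a * g a - ∑ a ∈ s, v a * g a) := by
  have cancel (a : ι) (ha : a ∈ s) : u a * (v a / u a) = v a :=
    mul_div_cancel_of_imp' (hsupp a ha)
  calc ∑ a ∈ s, ∑ b ∈ s.erase a, u a * u b * (g a - g b) * (v b / u b - v a / u a)
      = ∑ a ∈ s, ∑ b ∈ s, u a * u b * (g a - g b) * (v b / u b - v a / u a) :=
        sum_congr rfl fun a _ => sum_erase s (by simp)
    _ = ∑ a ∈ s, ∑ b ∈ s, (g a - g b) * (u a * v b - u b * v a) :=
        sum_congr rfl fun a ha => sum_congr rfl fun b hb => by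
          linear_combination (g a - g b) * (u a * cancel b hb - u b * cancel a ha)
    _ = 2 * (∑ a ∈ s, u a * g a - ∑ a ∈ s, v a * g a) := by
        rw [sum_sum_sub_mul_mul_sub_mul, hu, hv, mul_one, mul_one]

section Cluster

variable {A C : Type*} [Fintype A] [DecidableEq C] {pol π₀ π : A → ℝ} {φ : A → C} {a : A} {c : C}

/-- The mean of `g` under the within-cluster conditional `pol(· | c)`; it is `0` when the cluster
has probability `0`. -/
noncomputable def clusterMean (pol : A → ℝ) (φ : A → C) (g : A → ℝ) (c : C) : ℝ :=
  ∑ a ∈ univ.filter (fun a => φ a = c), condProb pol φ a c * g a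

theorem condProb_of_eq (ha : φ a = c) : condProb pol φ a c = pol a / clusterProb pol φ c := by
  rw [condProb, if_pos ha, mul_one]

theorem sum_condProb (hc : clusterProb pol φ c ≠ 0) :
    ∑ a ∈ univ.filter (fun a => φ a = c), condProb pol φ a c = 1 := by
  rw [sum_congr rfl fun a ha => condProb_of_eq (mem_filter.1 ha).2, ← sum_div]
  exact div_self hc

theorem eq_zero_of_clusterProb_eq_zero (hpol : ∀ a, 0 ≤ pol a) (hc : clusterProb pol φ c = 0)
    (ha : φ a = c) : pol a = 0 :=
  (sum_eq_zero_iff_of_nonneg fun a _ => hpol a).1 hc a (mem_filter.2 ⟨mem_univ a, ha⟩)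

theorem clusterProb_mul_condProb (hpol : ∀ a, 0 ≤ pol a) (ha : φ a = c) :
    clusterProb pol φ c * condProb pol φ a c = pol a := by
  rw [condProb_of_eq ha]
  exact mul_div_cancel_of_imp' fun hc => eq_zero_of_clusterProb_eq_zero hpol hc ha

theorem clusterProb_mul_clusterMean (hpol : ∀ a, 0 ≤ pol a) (g : A → ℝ) :
    clusterProb pol φ c * clusterMean pol φ g c =
      ∑ a ∈ univ.filter (fun a => φ a = c), pol a * g a := by
  rw [clusterMean, mul_sum]
  refine sum_congr rfl fun a ha => ?_
  rw [← mul_assoc, clusterProb_mul_condProb hpol (mem_filter.1 ha).2]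

theorem clusterProb_mul_clusterMean_eq_sum_clusterWeight (π₀ π : A → ℝ) (φ : A → C)
    (g : A → ℝ) (c : C) :
    clusterProb π φ c * clusterMean π₀ φ g c =
      ∑ a ∈ univ.filter (fun a => φ a = c), π₀ a * (clusterWeight π₀ π φ (φ a) * g a) := by
  rw [clusterMean, mul_sum]
  refine sum_congr rfl fun a ha => ?_
  have hac : φ a = c := (mem_filter.1 ha).2
  rw [hac, condProb_of_eq hac, clusterWeight]
  ring

theorem offcem_sub_value_eq_sum_clusterMean_sub [Fintype C] (hπ₀sum : ∑ a, π₀ a = 1)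
    (hπ : ∀ a, 0 ≤ π a) (φ : A → C) (q f : A → ℝ) :
    ∑ a, π₀ a * (clusterWeight π₀ π φ (φ a) * (q a - f a) + ∑ a', π a' * f a') -
        ∑ a, π a * q a =
      ∑ c, clusterProb π φ c *
        (clusterMean π₀ φ (fun a => q a - f a) c - clusterMean π φ (fun a => q a - f a) c) := by
  calc ∑ a, π₀ a * (clusterWeight π₀ π φ (φ a) * (q a - f a) + ∑ a', π a' * f a') -
        ∑ a, π a * q a
      = ∑ a, π₀ a * (clusterWeight π₀ π φ (φ a) * (q a - f a)) - ∑ a, π a * (q a - f a) := by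
        simp only [mul_add, sum_add_distrib, ← sum_mul, hπ₀sum, mul_sub (π _), sum_sub_distrib]
        ring
    _ = ∑ c, clusterProb π φ c *
          (clusterMean π₀ φ (fun a => q a - f a) c - clusterMean π φ (fun a => q a - f a) c) := by
        simp only [mul_sub (clusterProb π φ _), clusterProb_mul_clusterMean_eq_sum_clusterWeight,
          clusterProb_mul_clusterMean hπ, sum_sub_distrib, sum_fiberwise]

theorem clusterProb_mul_sum_sum_condProb [DecidableEq A] (hπ₀ : ∀ a, 0 ≤ π₀ a)
    (hsupp : ∀ a, π₀ a = 0 → π a = 0) (φ : A → C) (g : A → ℝ) (c : C) :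
    clusterProb π φ c *
        ∑ a ∈ univ.filter (fun a => φ a = c), ∑ b ∈ univ.filter (fun b => b ≠ a ∧ φ b = c),
          condProb π₀ φ a c * condProb π₀ φ b c * (g a - g b) *
            (condProb π φ b c / condProb π₀ φ b c - condProb π φ a c / condProb π₀ φ a c) =
      2 * (clusterProb π φ c * (clusterMean π₀ φ g c - clusterMean π φ g c)) := by
  rcases eq_or_ne (clusterProb π φ c) 0 with hc | hc
  · simp only [hc, zero_mul, mul_zero]
  have hc₀ : clusterProb π₀ φ c ≠ 0 := fun h => hc <| sum_eq_zero fun a ha =>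
    hsupp a (eq_zero_of_clusterProb_eq_zero hπ₀ h (mem_filter.1 ha).2)
  have condProb_supp (a : A) (ha : a ∈ univ.filter (fun a => φ a = c))
      (h : condProb π₀ φ a c = 0) : condProb π φ a c = 0 := by
    have hπ₀a : π₀ a = 0 := by
      rw [← clusterProb_mul_condProb hπ₀ (mem_filter.1 ha).2, h, mul_zero]
    rw [condProb, hsupp a hπ₀a, zero_mul, zero_div]
  have filter_eq_erase (a : A) : univ.filter (fun b => b ≠ a ∧ φ b = c) =
      (univ.filter (fun b => φ b = c)).erase a := by
    ext b
    simp
  simp only [filter_eq_erase]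
  rw [sum_sum_erase_mul_sub_mul_div_sub_div (sum_condProb hc₀) (sum_condProb hc) condProb_supp,
    mul_left_comm, clusterMean, clusterMean]

end Cluster

/-- Bias of the OffCEM estimator (Theorem 3.3): under common support, the gap
between the expectation `E` of the OffCEM estimator on a single logged sample
and the policy value `V(π)` has the stated pairwise form. -/
theorem offcem_bias
    {X A C : Type*} [Fintype X] [Fintype A] [Fintype C]
    [Nonempty X] [Nonempty A] [Nonempty C] [DecidableEq A] [DecidableEq C]
    (p : X → ℝ) (hp : ∀ x, 0 ≤ p x) (hpsum : ∑ x, p x = 1)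
    (π₀ π : X → A → ℝ)
    (hπ₀ : ∀ x a, 0 ≤ π₀ x a) (hπ₀sum : ∀ x, ∑ a, π₀ x a = 1)
    (hπ : ∀ x a, 0 ≤ π x a) (hπsum : ∀ x, ∑ a, π x a = 1)
    (φ : X → A → C)
    (q fhat : X → A → ℝ)
    (hsupp : ∀ x a, 0 < π x a → 0 < π₀ x a) :
    (∑ x, p x * ∑ a, π₀ x a *
        (clusterWeight (π₀ x) (π x) (φ x) (φ x a) * (q x a - fhat x a)
          + ∑ a', π x a' * fhat x a'))
      - (∑ x, p x * ∑ a, π x a * q x a)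
      = (1 / 2) * ∑ x, p x * ∑ c, clusterProb (π x) (φ x) c *
          ∑ a ∈ univ.filter (fun a => φ x a = c),
            ∑ b ∈ univ.filter (fun b => b ≠ a ∧ φ x b = c),
              condProb (π₀ x) (φ x) a c * condProb (π₀ x) (φ x) b c *
                ((q x a - q x b) - (fhat x a - fhat x b)) *
                (condProb (π x) (φ x) b c / condProb (π₀ x) (φ x) b c
                  - condProb (π x) (φ x) a c / condProb (π₀ x) (φ x) a c) := by
  have eq_zero_of_logging (x : X) (a : A) (h : π₀ x a = 0) : π x a = 0 :=
    (hπ x a).eq_or_lt.elim Eq.symm fun hpos => absurd h (hsupp x a hpos).ne'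
  rw [← sum_sub_distrib, mul_sum]
  refine sum_congr rfl fun x _ => ?_
  rw [← mul_sub, offcem_sub_value_eq_sum_clusterMean_sub (hπ₀sum x) (hπ x)]
  simp only [sub_sub_sub_comm (q x _) (q x _),
    clusterProb_mul_sum_sum_condProb (hπ₀ x) (eq_zero_of_logging x) (φ x)
      (fun a => q x a - fhat x a)]
  rw [← mul_sum]
  ring
end

section
/- (Variance of the Doubly Robust estimator.) Assume common support: for all x, a, π(a|x) > 0 implies π₀(a|x) > 0, and let w(x,a) := π(a|x)/π₀(a|x) (convention t/0 = 0). Let q̂ : 𝒳 × 𝒜 → ℝ be any reward model, q̂(x,π) := Σ_a π(a|x) q̂(x,a), and Y(x,a,r) := w(x,a) · (ρ(r) − q̂(x,a)) + q̂(x,π), a real random variable under the joint distribution μ(x,a,r) := p(x)·π₀(a|x)·p(r|x,a). Then Var_μ[Y] = Σ_x p(x) Σ_a π₀(a|x) · w(x,a)² · σ²(x,a) + Σ_x p(x) · Var_{π₀(·|x)}[ a ↦ w(x,a) · (q(x,a) − q̂(x,a)) ] + Var_p[ x ↦ Σ_a π(a|x) q(x,a) ]. -/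
open Finset

/-- Variance of a real-valued function `Z` under a distribution `ν` on a
finite type: `Var_ν[Z] = ∑ ω, ν ω * (Z ω - ∑ ω', ν ω' * Z ω')²`. -/
noncomputable def distVar {Ω : Type*} [Fintype Ω] (ν Z : Ω → ℝ) : ℝ :=
  ∑ ω, ν ω * (Z ω - ∑ ω', ν ω' * Z ω') ^ 2

/-!
Apply the law of total variance twice, first conditioning on the context and then on the action.
Given context and action, the estimator is affine in the reward with slope `w`, which yields the
noise term; given only the context it has mean `∑ a, π x a * q x a`, because reweighting by `w`
turns the logging policy into the target policy and the two model terms cancel.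
-/

section Variance

variable {Ω Ω' : Type*} [Fintype Ω] [Fintype Ω']

theorem sum_mul_add_const {ν : Ω → ℝ} (hν : ∑ ω, ν ω = 1) (Z : Ω → ℝ) (c : ℝ) :
    ∑ ω, ν ω * (Z ω + c) = ∑ ω, ν ω * Z ω + c := by
  simp only [mul_add, sum_add_distrib, ← sum_mul, hν, one_mul]

theorem sum_mul_sub_const {ν : Ω → ℝ} (hν : ∑ ω, ν ω = 1) (Z : Ω → ℝ) (c : ℝ) :
    ∑ ω, ν ω * (Z ω - c) = ∑ ω, ν ω * Z ω - c := by
  simpa only [sub_eq_add_neg] using sum_mul_add_const hν Z (-c)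

theorem sum_mul_const_mul (ν Z : Ω → ℝ) (c : ℝ) :
    ∑ ω, ν ω * (c * Z ω) = c * ∑ ω, ν ω * Z ω := by
  simp only [mul_left_comm, mul_sum]

theorem distVar_add_const {ν : Ω → ℝ} (hν : ∑ ω, ν ω = 1) (Z : Ω → ℝ) (c : ℝ) :
    distVar ν (fun ω => Z ω + c) = distVar ν Z := by
  simp only [distVar, sum_mul_add_const hν, add_sub_add_right_eq_sub]

theorem distVar_sub_const {ν : Ω → ℝ} (hν : ∑ ω, ν ω = 1) (Z : Ω → ℝ) (c : ℝ) :
    distVar ν (fun ω => Z ω - c) = distVar ν Z := by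
  simpa only [sub_eq_add_neg] using distVar_add_const hν Z (-c)

theorem distVar_const_mul (ν Z : Ω → ℝ) (c : ℝ) :
    distVar ν (fun ω => c * Z ω) = c ^ 2 * distVar ν Z := by
  simp only [distVar, sum_mul_const_mul, ← mul_sub, mul_pow]

theorem sum_mul_affine {ν : Ω → ℝ} (hν : ∑ ω, ν ω = 1) (Z : Ω → ℝ) (c b d : ℝ) :
    ∑ ω, ν ω * (c * (Z ω - b) + d) = c * (∑ ω, ν ω * Z ω - b) + d := by
  rw [sum_mul_add_const hν, sum_mul_const_mul, sum_mul_sub_const hν]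

theorem distVar_affine {ν : Ω → ℝ} (hν : ∑ ω, ν ω = 1) (Z : Ω → ℝ) (c b d : ℝ) :
    distVar ν (fun ω => c * (Z ω - b) + d) = c ^ 2 * distVar ν Z := by
  rw [distVar_add_const hν, distVar_const_mul, distVar_sub_const hν]

theorem sum_mul_sub_sq_eq_distVar_add {ν : Ω → ℝ} (hν : ∑ ω, ν ω = 1) (Z : Ω → ℝ) (c : ℝ) :
    ∑ ω, ν ω * (Z ω - c) ^ 2 = distVar ν Z + (∑ ω, ν ω * Z ω - c) ^ 2 := by
  set m := ∑ ω, ν ω * Z ω with hm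
  have centered : ∑ ω, ν ω * (Z ω - m) = 0 := by
    rw [sum_mul_sub_const hν, ← hm, sub_self]
  calc ∑ ω, ν ω * (Z ω - c) ^ 2
      = ∑ ω, ν ω * ((Z ω - m) ^ 2 + 2 * (m - c) * (Z ω - m) + (m - c) ^ 2) :=
        sum_congr rfl fun ω _ => by ring
    _ = ∑ ω, ν ω * (Z ω - m) ^ 2 + 2 * (m - c) * ∑ ω, ν ω * (Z ω - m) + (m - c) ^ 2 := by
        rw [sum_mul_add_const hν]
        simp only [mul_add, sum_add_distrib, sum_mul_const_mul]
    _ = distVar ν Z + (m - c) ^ 2 := by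
        rw [centered, mul_zero, add_zero, distVar]

theorem sum_prod_mul_eq_sum_mul_sum (ν : Ω → ℝ) (κ : Ω → Ω' → ℝ) (Z : Ω × Ω' → ℝ) :
    ∑ z : Ω × Ω', ν z.1 * κ z.1 z.2 * Z z = ∑ ω, ν ω * ∑ ω', κ ω ω' * Z (ω, ω') := by
  simp only [Fintype.sum_prod_type, mul_assoc, mul_sum]

theorem sum_prod_eq_one {ν : Ω → ℝ} {κ : Ω → Ω' → ℝ} (hν : ∑ ω, ν ω = 1)
    (hκ : ∀ ω, ∑ ω', κ ω ω' = 1) : ∑ z : Ω × Ω', ν z.1 * κ z.1 z.2 = 1 := by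
  simp only [Fintype.sum_prod_type, ← mul_sum, hκ, mul_one, hν]

theorem distVar_prod_eq_sum_distVar_add_distVar_sum (ν : Ω → ℝ) {κ : Ω → Ω' → ℝ}
    (hκ : ∀ ω, ∑ ω', κ ω ω' = 1) (Z : Ω × Ω' → ℝ) :
    distVar (fun z : Ω × Ω' => ν z.1 * κ z.1 z.2) Z
      = ∑ ω, ν ω * distVar (κ ω) (fun ω' => Z (ω, ω'))
        + distVar ν (fun ω => ∑ ω', κ ω ω' * Z (ω, ω')) := by
  rw [distVar, sum_prod_mul_eq_sum_mul_sum ν κ Z,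
    sum_prod_mul_eq_sum_mul_sum ν κ (fun z => (Z z - _) ^ 2)]
  simp only [sum_mul_sub_sq_eq_distVar_add (hκ _), mul_add, sum_add_distrib]
  rfl

end Variance

section FixedContext

variable {A R : Type*} [Fintype A] [Fintype R] {pr : A → R → ℝ} {ρ : R → ℝ} {q : A → ℝ}

theorem sum_mul_doublyRobust {π₀ π w : A → ℝ} (hπ₀sum : ∑ a, π₀ a = 1)
    (hw : ∀ a, π₀ a * w a = π a) (hprsum : ∀ a, ∑ r, pr a r = 1)
    (hmean : ∀ a, ∑ r, pr a r * ρ r = q a) (qhat : A → ℝ) :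
    ∑ z : A × R, π₀ z.1 * pr z.1 z.2 *
        (w z.1 * (ρ z.2 - qhat z.1) + ∑ a, π a * qhat a) = ∑ a, π a * q a := by
  rw [sum_prod_mul_eq_sum_mul_sum π₀ pr
    (fun z => w z.1 * (ρ z.2 - qhat z.1) + ∑ a, π a * qhat a)]
  calc ∑ a, π₀ a * ∑ r, pr a r * (w a * (ρ r - qhat a) + ∑ a', π a' * qhat a')
      = ∑ a, π₀ a * (w a * (q a - qhat a)) + ∑ a, π a * qhat a := by
        simp only [sum_mul_affine (hprsum _), hmean, sum_mul_add_const hπ₀sum]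
    _ = ∑ a, π a * (q a - qhat a) + ∑ a, π a * qhat a := by
        simp only [← mul_assoc, hw]
    _ = ∑ a, π a * q a := by
        simp only [mul_sub, sum_sub_distrib, sub_add_cancel]

theorem distVar_doublyRobust {π₀ : A → ℝ} (hπ₀sum : ∑ a, π₀ a = 1)
    (hprsum : ∀ a, ∑ r, pr a r = 1) (hmean : ∀ a, ∑ r, pr a r * ρ r = q a)
    (w qhat : A → ℝ) (v : ℝ) :
    distVar (fun z : A × R => π₀ z.1 * pr z.1 z.2)
        (fun z => w z.1 * (ρ z.2 - qhat z.1) + v)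
      = ∑ a, π₀ a * w a ^ 2 * distVar (pr a) ρ
        + distVar π₀ (fun a => w a * (q a - qhat a)) := by
  rw [distVar_prod_eq_sum_distVar_add_distVar_sum π₀ hprsum]
  simp only [distVar_affine (hprsum _), sum_mul_affine (hprsum _), hmean,
    distVar_add_const hπ₀sum, mul_assoc]

end FixedContext

theorem mul_div_cancel_of_pos_imp_pos {s t : ℝ} (ht : 0 ≤ t) (h : 0 < t → 0 < s) :
    s * (t / s) = t :=
  mul_div_cancel_of_imp' fun hs => le_antisymm (not_lt.1 fun hpos => (h hpos).ne' hs) ht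

theorem dr_variance_general
    {X A R : Type*} [Fintype X] [Fintype A] [Fintype R]
    (p : X → ℝ) {π₀ π w : X → A → ℝ} (hπ₀sum : ∀ x, ∑ a, π₀ x a = 1)
    (hw : ∀ x a, π₀ x a * w x a = π x a)
    {q : X → A → ℝ} (qhat : X → A → ℝ) {ρ : R → ℝ} {pr : X → A → R → ℝ}
    (hprsum : ∀ x a, ∑ r, pr x a r = 1) (hmean : ∀ x a, ∑ r, pr x a r * ρ r = q x a) :
    distVar (fun z : X × A × R => p z.1 * π₀ z.1 z.2.1 * pr z.1 z.2.1 z.2.2)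
        (fun z => w z.1 z.2.1 * (ρ z.2.2 - qhat z.1 z.2.1) + ∑ a, π z.1 a * qhat z.1 a)
      = (∑ x, p x * ∑ a, π₀ x a * w x a ^ 2 * (∑ r, pr x a r * (ρ r - q x a) ^ 2))
        + (∑ x, p x * distVar (π₀ x) (fun a => w x a * (q x a - qhat x a)))
        + distVar p (fun x => ∑ a, π x a * q x a) := by
  have reward_var (x : X) (a : A) : ∑ r, pr x a r * (ρ r - q x a) ^ 2 = distVar (pr x a) ρ := by
    rw [distVar, hmean]
  have joint_sum (x : X) : ∑ z : A × R, π₀ x z.1 * pr x z.1 z.2 = 1 :=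
    sum_prod_eq_one (hπ₀sum x) (hprsum x)
  simp only [reward_var, mul_assoc (p _)]
  rw [distVar_prod_eq_sum_distVar_add_distVar_sum p joint_sum]
  simp only [distVar_doublyRobust (hπ₀sum _) (hprsum _) (hmean _),
    sum_mul_doublyRobust (hπ₀sum _) (hw _) (hprsum _) (hmean _)]
  simp only [mul_add, sum_add_distrib]

/-- Variance of the Doubly Robust estimator: under common support, with the
vanilla importance weight `w(x,a) = π(a|x)/π₀(a|x)` (convention `t/0 = 0`),
the variance of the per-sample DR random variable decomposes into the three
stated terms. -/
theorem dr_variance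
    {X A R : Type*} [Fintype X] [Fintype A] [Fintype R]
    [Nonempty X] [Nonempty A] [Nonempty R]
    (p : X → ℝ) (hp : ∀ x, 0 ≤ p x) (hpsum : ∑ x, p x = 1)
    (π₀ π : X → A → ℝ)
    (hπ₀ : ∀ x a, 0 ≤ π₀ x a) (hπ₀sum : ∀ x, ∑ a, π₀ x a = 1)
    (hπ : ∀ x a, 0 ≤ π x a) (hπsum : ∀ x, ∑ a, π x a = 1)
    (q qhat : X → A → ℝ)
    (ρ : R → ℝ) (pr : X → A → R → ℝ)
    (hpr : ∀ x a r, 0 ≤ pr x a r) (hprsum : ∀ x a, ∑ r, pr x a r = 1)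
    (hmean : ∀ x a, ∑ r, pr x a r * ρ r = q x a)
    (hsupp : ∀ x a, 0 < π x a → 0 < π₀ x a) :
    distVar (fun z : X × A × R => p z.1 * π₀ z.1 z.2.1 * pr z.1 z.2.1 z.2.2)
        (fun z : X × A × R =>
          (π z.1 z.2.1 / π₀ z.1 z.2.1) * (ρ z.2.2 - qhat z.1 z.2.1)
            + ∑ a', π z.1 a' * qhat z.1 a')
      = (∑ x, p x * ∑ a, π₀ x a * (π x a / π₀ x a) ^ 2 *
            (∑ r, pr x a r * (ρ r - q x a) ^ 2))
        + (∑ x, p x * distVar (π₀ x)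
            (fun a => (π x a / π₀ x a) * (q x a - qhat x a)))
        + distVar p (fun x => ∑ a, π x a * q x a) := by
  exact dr_variance_general p hπ₀sum
    (fun x a => mul_div_cancel_of_pos_imp_pos (hπ x a) (hsupp x a)) qhat hprsum hmean
end

section
/- (Zero bias under within-cluster policy agreement.) Assume common support: for all x, a, π(a|x) > 0 implies π₀(a|x) > 0. Assume additionally that the target and logging policies agree conditionally within each cluster: for all x and a, π(a|x) · π₀(φ(x,a)|x) = π₀(a|x) · π(φ(x,a)|x). Then for every regression model f̂ : 𝒳 × 𝒜 → ℝ, the expectation of the OffCEM estimator on a single logged sample equals the policy value: Σ_x p(x) Σ_a π₀(a|x) [ w(x, φ(x,a)) · (q(x,a) − f̂(x,a)) + f̂(x,π) ] = V(π). -/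
open Finset

/-!
Within-cluster agreement says that reweighting the logging policy by the cluster weight gives back
the target policy, `π₀(a|x) · w(x, φ(x,a)) = π(a|x)`: the cluster weight is the ordinary importance
weight. The reweighted residuals then average to the value of `q` minus that of `f̂`, and the
baseline `f̂(x,π)` restores the latter.
-/

theorem le_clusterProb {A C : Type*} [Fintype A] [DecidableEq C] {pol : A → ℝ}
    (hpol : ∀ a, 0 ≤ pol a) (φ : A → C) (a : A) : pol a ≤ clusterProb pol φ (φ a) :=
  single_le_sum (fun b _ => hpol b) (by simp)

theorem mul_clusterWeight_eq_of_agree {A C : Type*} [Fintype A] [DecidableEq C]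
    {π₀ π : A → ℝ} {φ : A → C} {a : A} (hπ₀ : ∀ b, 0 ≤ π₀ b) (hsupp : π₀ a = 0 → π a = 0)
    (hagree : π a * clusterProb π₀ φ (φ a) = π₀ a * clusterProb π φ (φ a)) :
    π₀ a * clusterWeight π₀ π φ (φ a) = π a := by
  rcases (hπ₀ a).eq_or_lt with hzero | hpos
  · rw [← hzero, zero_mul, hsupp hzero.symm]
  · have hcluster : clusterProb π₀ φ (φ a) ≠ 0 := (hpos.trans_le (le_clusterProb hπ₀ φ a)).ne'
    rw [clusterWeight, ← mul_div_assoc, ← hagree, mul_div_cancel_right₀ _ hcluster]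

theorem sum_mul_weighted_residual_add_baseline {R ι : Type*} [Ring R] {s : Finset ι}
    {μ ν w : ι → R} (hμ : ∑ i ∈ s, μ i = 1) (hw : ∀ i ∈ s, μ i * w i = ν i) (q f : ι → R) :
    ∑ i ∈ s, μ i * (w i * (q i - f i) + ∑ j ∈ s, ν j * f j) = ∑ i ∈ s, ν i * q i := by
  have hresidual : ∑ i ∈ s, μ i * (w i * (q i - f i))
      = ∑ i ∈ s, ν i * q i - ∑ i ∈ s, ν i * f i := by
    rw [← sum_sub_distrib]
    exact sum_congr rfl fun i hi => by rw [← mul_assoc, hw i hi, mul_sub]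
  have hbaseline : ∑ i ∈ s, μ i * ∑ j ∈ s, ν j * f j = ∑ j ∈ s, ν j * f j := by
    rw [← sum_mul, hμ, one_mul]
  simp only [mul_add, sum_add_distrib, hresidual, hbaseline, sub_add_cancel]

theorem offcem_zero_bias_within_cluster_agreement_general
    {X A C : Type*} [Fintype X] [Fintype A] [DecidableEq C]
    (p : X → ℝ) (π₀ π : X → A → ℝ)
    (hπ₀ : ∀ x a, 0 ≤ π₀ x a) (hπ₀sum : ∀ x, ∑ a, π₀ x a = 1)
    (φ : X → A → C) (q : X → A → ℝ)
    (hsupp : ∀ x a, π₀ x a = 0 → π x a = 0)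
    (hagree : ∀ x a,
      π x a * clusterProb (π₀ x) (φ x) (φ x a)
        = π₀ x a * clusterProb (π x) (φ x) (φ x a))
    (fhat : X → A → ℝ) :
    ∑ x, p x * ∑ a, π₀ x a *
        (clusterWeight (π₀ x) (π x) (φ x) (φ x a) * (q x a - fhat x a)
          + ∑ a', π x a' * fhat x a')
      = ∑ x, p x * ∑ a, π x a * q x a := by
  refine sum_congr rfl fun x _ => congrArg (p x * ·) ?_
  exact sum_mul_weighted_residual_add_baseline (hπ₀sum x)
    (fun a _ => mul_clusterWeight_eq_of_agree (hπ₀ x) (hsupp x a) (hagree x a)) (q x) (fhat x)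

/-- Zero bias of OffCEM under within-cluster policy agreement: if the target
and logging policies agree conditionally within each cluster, i.e.
`π(a|x) · π₀(φ(x,a)|x) = π₀(a|x) · π(φ(x,a)|x)` for all `x, a`, then for every
regression model `f̂` the expectation of the OffCEM estimator on a single
logged sample equals the policy value. -/
theorem offcem_zero_bias_within_cluster_agreement
    {X A C : Type*} [Fintype X] [Fintype A] [Fintype C]
    [Nonempty X] [Nonempty A] [Nonempty C] [DecidableEq C]
    (p : X → ℝ) (hp : ∀ x, 0 ≤ p x) (hpsum : ∑ x, p x = 1)
    (π₀ π : X → A → ℝ)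
    (hπ₀ : ∀ x a, 0 ≤ π₀ x a) (hπ₀sum : ∀ x, ∑ a, π₀ x a = 1)
    (hπ : ∀ x a, 0 ≤ π x a) (hπsum : ∀ x, ∑ a, π x a = 1)
    (φ : X → A → C)
    (q : X → A → ℝ)
    (hsupp : ∀ x a, 0 < π x a → 0 < π₀ x a)
    (hagree : ∀ x a,
      π x a * clusterProb (π₀ x) (φ x) (φ x a)
        = π₀ x a * clusterProb (π x) (φ x) (φ x a))
    (fhat : X → A → ℝ) :
    ∑ x, p x * ∑ a, π₀ x a *
        (clusterWeight (π₀ x) (π x) (φ x) (φ x a) * (q x a - fhat x a)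
          + ∑ a', π x a' * fhat x a')
      = ∑ x, p x * ∑ a, π x a * q x a :=
  offcem_zero_bias_within_cluster_agreement_general p π₀ π hπ₀ hπ₀sum φ q
    (fun x a hzero => ((hπ x a).eq_of_not_lt fun hpos => (hsupp x a hpos).ne' hzero).symm)
    hagree fhat
end

section
/- (Zero bias under within-cluster deterministic logging.) Assume common support: for all x, a, π(a|x) > 0 implies π₀(a|x) > 0. Assume additionally that the logging policy is within-cluster deterministic: for every x ∈ 𝒳 and c ∈ 𝒞 there is at most one action a with φ(x,a) = c and π₀(a|x) > 0. Then for every regression model f̂ : 𝒳 × 𝒜 → ℝ, the expectation of the OffCEM estimator on a single logged sample equals the policy value: Σ_x p(x) Σ_a π₀(a|x) [ w(x, φ(x,a)) · (q(x,a) − f̂(x,a)) + f̂(x,π) ] = V(π). -/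
open Finset

/-! Each logged action is the only action of its cluster charged by the logging policy, hence by
the target policy as well. The cluster weight at a logged action `a` is therefore the ordinary
importance weight `π(a|x) / π₀(a|x)`, so the weighted residual has expectation
`∑ a, π(a|x) (q(x,a) - f̂(x,a))`, and adding back `f̂(x,π)` cancels the regression model. -/

open Function

section SingleContext

variable {A C : Type*} [Fintype A] [DecidableEq C] {π₀ π : A → ℝ} {φ : A → C}

theorem clusterProb_apply_of_injOn {pol : A → ℝ} {s : Set A} (hpol : support pol ⊆ s)
    (hφ : Set.InjOn φ s) {a : A} (ha : a ∈ s) : clusterProb pol φ (φ a) = pol a := by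
  refine sum_eq_single_of_mem a (by simp) fun b hb hba => ?_
  by_contra hb_ne
  exact hba (hφ (hpol hb_ne) ha (mem_filter.mp hb).2)

theorem mul_clusterWeight_of_injOn_support (hsupp : support π ⊆ support π₀)
    (hφ : Set.InjOn φ (support π₀)) (a : A) :
    π₀ a * clusterWeight π₀ π φ (φ a) = π a := by
  by_cases ha : a ∈ support π₀
  · rw [clusterWeight, clusterProb_apply_of_injOn hsupp hφ ha,
      clusterProb_apply_of_injOn subset_rfl hφ ha, mul_div_cancel₀ _ ha]
  · rw [notMem_support.mp ha, notMem_support.mp fun h => ha (hsupp h), zero_mul]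

theorem sum_offcem_eq_of_injOn_support (hsum : ∑ a, π₀ a = 1) (hsupp : support π ⊆ support π₀)
    (hφ : Set.InjOn φ (support π₀)) (q fhat : A → ℝ) :
    ∑ a, π₀ a * (clusterWeight π₀ π φ (φ a) * (q a - fhat a) + ∑ a', π a' * fhat a')
      = ∑ a, π a * q a :=
  calc
    _ = ∑ a, π a * (q a - fhat a) + (∑ a, π₀ a) * ∑ a, π a * fhat a := by
      simp only [mul_add, ← mul_assoc, mul_clusterWeight_of_injOn_support hsupp hφ,
        sum_add_distrib, sum_mul]
    _ = ∑ a, π a * q a := by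
      simp only [hsum, one_mul, mul_sub, sum_sub_distrib, sub_add_cancel]

end SingleContext

theorem offcem_zero_bias_within_cluster_deterministic_general
    {X A C : Type*} [Fintype X] [Fintype A] [DecidableEq C]
    (p : X → ℝ) (π₀ π : X → A → ℝ) (hπ₀sum : ∀ x, ∑ a, π₀ x a = 1)
    (φ : X → A → C) (q : X → A → ℝ)
    (hsupp : ∀ x, support (π x) ⊆ support (π₀ x))
    (hdet : ∀ x, Set.InjOn (φ x) (support (π₀ x)))
    (fhat : X → A → ℝ) :
    ∑ x, p x * ∑ a, π₀ x a *
        (clusterWeight (π₀ x) (π x) (φ x) (φ x a) * (q x a - fhat x a)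
          + ∑ a', π x a' * fhat x a')
      = ∑ x, p x * ∑ a, π x a * q x a :=
  sum_congr rfl fun x _ => congrArg (p x * ·) <|
    sum_offcem_eq_of_injOn_support (hπ₀sum x) (hsupp x) (hdet x) (q x) (fhat x)

/-- Zero bias of OffCEM under within-cluster deterministic logging: if for
every context `x` and cluster `c` there is at most one action `a` with
`φ(x,a) = c` and `π₀(a|x) > 0`, then for every regression model `f̂` the
expectation of the OffCEM estimator on a single logged sample equals the
policy value. -/
theorem offcem_zero_bias_within_cluster_deterministic
    {X A C : Type*} [Fintype X] [Fintype A] [Fintype C]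
    [Nonempty X] [Nonempty A] [Nonempty C] [DecidableEq C]
    (p : X → ℝ) (hp : ∀ x, 0 ≤ p x) (hpsum : ∑ x, p x = 1)
    (π₀ π : X → A → ℝ)
    (hπ₀ : ∀ x a, 0 ≤ π₀ x a) (hπ₀sum : ∀ x, ∑ a, π₀ x a = 1)
    (hπ : ∀ x a, 0 ≤ π x a) (hπsum : ∀ x, ∑ a, π x a = 1)
    (φ : X → A → C)
    (q : X → A → ℝ)
    (hsupp : ∀ x a, 0 < π x a → 0 < π₀ x a)
    (hdet : ∀ x (c : C) (a b : A),
      φ x a = c → φ x b = c → 0 < π₀ x a → 0 < π₀ x b → a = b)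
    (fhat : X → A → ℝ) :
    ∑ x, p x * ∑ a, π₀ x a *
        (clusterWeight (π₀ x) (π x) (φ x) (φ x a) * (q x a - fhat x a)
          + ∑ a', π x a' * fhat x a')
      = ∑ x, p x * ∑ a, π x a * q x a := by
  exact offcem_zero_bias_within_cluster_deterministic_general p π₀ π hπ₀sum φ q
    (fun x a ha => (hsupp x a ((hπ x a).lt_of_ne' ha)).ne')
    (fun x a ha b hb hab => hdet x _ a b hab rfl
      ((hπ₀ x a).lt_of_ne' ha) ((hπ₀ x b).lt_of_ne' hb)) fhat
end

section
/- (Bias of OffCEM with stochastic action embeddings.) Assume common support: for all x, a, π(a|x) > 0 implies π₀(a|x) > 0, and let w(x,a) := π(a|x)/π₀(a|x) (convention t/0 = 0). Let E := Σ_x p(x) Σ_a Σ_e π₀(a,e|x) · w(x, φ(x,e)) · (q(x,a,e) − f̂(x,a,e)) + Σ_x p(x) · f̂(x,π) be the expectation of the generalized OffCEM estimator on a single logged sample, and write Δ(x,a,e) := q(x,a,e) − f̂(x,a,e). Then E − V(π) = (1/2) · Σ_x p(x) Σ_c π₀(c|x) Σ_{(a,e)} Σ_{(a',e')} π₀(a,e|x,c)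 · π₀(a',e'|x,c) · (Δ(x,a,e) − Δ(x,a',e')) · (w(x,a') − w(x,a)). -/
open Finset

/-- The probability that a joint policy-embedding distribution `joint` on
`A × E` puts on the cluster `c` under the embedding clustering `φ : E → C`
(for a fixed context). -/
noncomputable def eClusterProb {A E C : Type*} [Fintype A] [Fintype E] [DecidableEq C]
    (joint : A → E → ℝ) (φ : E → C) (c : C) : ℝ :=
  ∑ a, ∑ e ∈ univ.filter (fun e => φ e = c), joint a e

/-- Within-cluster conditional probability of an action-embedding pair:
`joint(a,e | c) = joint(a,e) · 𝟙{φ(e) = c} / joint(c)`, with the convention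
`t / 0 = 0`. -/
noncomputable def eCondProb {A E C : Type*} [Fintype A] [Fintype E] [DecidableEq C]
    (joint : A → E → ℝ) (φ : E → C) (a : A) (e : E) (c : C) : ℝ :=
  joint a e * (if φ e = c then (1 : ℝ) else 0) / eClusterProb joint φ c

/-!
The cluster weight `w(x,c)` is the mean of the weight `w` under the within-cluster conditional
`π₀(·,·|x,c)`. Hence cluster `c` contributes to the bias `π₀(c|x)` times
`𝔼[w] 𝔼[Δ] - 𝔼[w Δ] = -Cov(w, Δ)`, taken under that conditional, and the pairwise form is the
symmetrization `Cov(f, g) = ½ 𝔼[(f - f') (g - g')]` over two independent copies.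
-/

section Covariance

variable {ι K : Type*}

theorem sum_sum_mul_sub_mul_sub [CommRing K] (t : Finset ι) (s f g : ι → K) :
    ∑ i ∈ t, ∑ j ∈ t, s i * s j * (f i - f j) * (g j - g i)
      = 2 * ((∑ i ∈ t, s i * g i) * ∑ i ∈ t, s i * f i
          - (∑ i ∈ t, s i) * ∑ i ∈ t, s i * g i * f i) := by
  have expand (i j : ι) : s i * s j * (f i - f j) * (g j - g i)
      = (s i * f i) * (s j * g j) - (s i * g i * f i) * s j
        - s i * (s j * g j * f j) + (s i * g i) * (s j * f j) := by
    ring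
  simp only [expand, sum_add_distrib, sum_sub_distrib, ← mul_sum, ← sum_mul]
  ring

theorem sum_mul_sum_sum_div_mul_sub_mul_sub [Field K] [LinearOrder K] [IsStrictOrderedRing K]
    (t : Finset ι) {s : ι → K} (hs : ∀ i ∈ t, 0 ≤ s i) (f g : ι → K) :
    (∑ i ∈ t, s i) * ∑ i ∈ t, ∑ j ∈ t,
        (s i / ∑ k ∈ t, s k) * (s j / ∑ k ∈ t, s k) * (f i - f j) * (g j - g i)
      = 2 * ((∑ i ∈ t, s i * g i) / (∑ i ∈ t, s i) * ∑ i ∈ t, s i * f i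
          - ∑ i ∈ t, s i * g i * f i) := by
  rcases eq_or_ne (∑ i ∈ t, s i) 0 with mass_zero | mass_ne_zero
  · have weight_zero : ∀ i ∈ t, s i = 0 := (sum_eq_zero_iff_of_nonneg hs).1 mass_zero
    have cross_zero : ∑ i ∈ t, s i * g i * f i = 0 :=
      sum_eq_zero fun i hi => by rw [weight_zero i hi, zero_mul, zero_mul]
    simp [mass_zero, cross_zero]
  · have pull_out_mass : ∑ i ∈ t, ∑ j ∈ t,
          (s i / ∑ k ∈ t, s k) * (s j / ∑ k ∈ t, s k) * (f i - f j) * (g j - g i)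
        = (∑ i ∈ t, ∑ j ∈ t, s i * s j * (f i - f j) * (g j - g i)) / (∑ k ∈ t, s k) ^ 2 := by
      simp only [sum_div]
      refine sum_congr rfl fun i _ => sum_congr rfl fun j _ => ?_
      ring
    rw [pull_out_mass, sum_sum_mul_sub_mul_sub]
    field_simp

end Covariance

section Cluster

variable {A E C : Type*} [Fintype A] [Fintype E] [DecidableEq C]

theorem eClusterProb_eq_sum_prod (joint : A → E → ℝ) (φ : E → C) (c : C) :
    eClusterProb joint φ c
      = ∑ i : A × E, joint i.1 i.2 * (if φ i.2 = c then (1 : ℝ) else 0) := by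
  simp [eClusterProb, Fintype.sum_prod_type, sum_filter]

theorem sum_eClusterProb [Fintype C] (joint : A → E → ℝ) (φ : E → C) :
    ∑ c, eClusterProb joint φ c = ∑ a, ∑ e, joint a e := by
  simp only [eClusterProb]
  rw [sum_comm]
  exact sum_congr rfl fun a _ => sum_fiberwise univ φ (joint a)

theorem eClusterProb_comp_mul (joint : A → E → ℝ) (φ : E → C) (g : C → ℝ) (c : C) :
    eClusterProb (fun a e => g (φ e) * joint a e) φ c = g c * eClusterProb joint φ c := by
  simp only [eClusterProb, mul_sum]
  refine sum_congr rfl fun a _ => sum_congr rfl fun e he => ?_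
  rw [(mem_filter.1 he).2]

theorem eClusterProb_mul_sum_eCondProb {joint : A → E → ℝ} (hjoint : ∀ a e, 0 ≤ joint a e)
    (φ : E → C) (w D : A → E → ℝ) (c : C) :
    eClusterProb joint φ c * ∑ a, ∑ e, ∑ a', ∑ e',
        eCondProb joint φ a e c * eCondProb joint φ a' e' c
          * (D a e - D a' e') * (w a' e' - w a e)
      = 2 * (eClusterProb (fun a e => joint a e * w a e) φ c / eClusterProb joint φ c
            * eClusterProb (fun a e => joint a e * D a e) φ c
          - eClusterProb (fun a e => joint a e * w a e * D a e) φ c) := by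
  have restricted_nonneg : ∀ i ∈ (univ : Finset (A × E)),
      0 ≤ joint i.1 i.2 * (if φ i.2 = c then (1 : ℝ) else 0) :=
    fun i _ => mul_nonneg (hjoint _ _) (by split_ifs <;> norm_num)
  have covariance := sum_mul_sum_sum_div_mul_sub_mul_sub univ restricted_nonneg
    (fun i => D i.1 i.2) (fun i => w i.1 i.2)
  simp only [eCondProb, eClusterProb_eq_sum_prod, Fintype.sum_prod_type,
    mul_right_comm _ (w _ _) (ite _ _ _), mul_right_comm _ (D _ _) (ite _ _ _)]
  simpa only [Fintype.sum_prod_type] using covariance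

theorem sum_mul_eClusterProb_div_mul_sub_sum [Fintype C] {joint₀ joint w : A → E → ℝ}
    (hjoint₀ : ∀ a e, 0 ≤ joint₀ a e) (hw : ∀ a e, joint a e = joint₀ a e * w a e)
    (φ : E → C) (D : A → E → ℝ) :
    (∑ a, ∑ e, joint₀ a e * (eClusterProb joint φ (φ e) / eClusterProb joint₀ φ (φ e) * D a e))
        - ∑ a, ∑ e, joint a e * D a e
      = (1 / 2) * ∑ c, eClusterProb joint₀ φ c * ∑ a, ∑ e, ∑ a', ∑ e',
          eCondProb joint₀ φ a e c * eCondProb joint₀ φ a' e' c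
            * (D a e - D a' e') * (w a' e' - w a e) := by
  obtain rfl : joint = fun a e => joint₀ a e * w a e := funext₂ hw
  set W : C → ℝ := fun c =>
    eClusterProb (fun a e => joint₀ a e * w a e) φ c / eClusterProb joint₀ φ c
  have reweighted_eq : ∑ a, ∑ e, joint₀ a e * (W (φ e) * D a e)
      = ∑ c, W c * eClusterProb (fun a e => joint₀ a e * D a e) φ c := by
    simp only [← eClusterProb_comp_mul, sum_eClusterProb, mul_left_comm]
  have target_eq : ∑ a, ∑ e, joint₀ a e * w a e * D a e
      = ∑ c, eClusterProb (fun a e => joint₀ a e * w a e * D a e) φ c :=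
    (sum_eClusterProb _ φ).symm
  simp only [eClusterProb_mul_sum_eCondProb hjoint₀, ← mul_sum, sum_sub_distrib]
  rw [reweighted_eq, target_eq, one_div, inv_mul_cancel_left₀ two_ne_zero]

end Cluster

theorem offcem_bias_stochastic_embeddings_general
    {X A E C : Type*} [Fintype X] [Fintype A] [Fintype E] [Fintype C] [DecidableEq C]
    (p : X → ℝ) {joint₀ joint w : X → A → E → ℝ}
    (hjoint₀ : ∀ x a e, 0 ≤ joint₀ x a e)
    (hw : ∀ x a e, joint x a e = joint₀ x a e * w x a e)
    (φ : X → E → C) (q fhat : X → A → E → ℝ) :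
    ((∑ x, p x * ∑ a, ∑ e, joint₀ x a e *
          ((eClusterProb (joint x) (φ x) (φ x e) / eClusterProb (joint₀ x) (φ x) (φ x e))
            * (q x a e - fhat x a e)))
        + (∑ x, p x * ∑ a, ∑ e, joint x a e * fhat x a e))
      - (∑ x, p x * ∑ a, ∑ e, joint x a e * q x a e)
      = (1 / 2) * ∑ x, p x * ∑ c,
          eClusterProb (joint₀ x) (φ x) c *
            ∑ a, ∑ e, ∑ a', ∑ e',
              eCondProb (joint₀ x) (φ x) a e c * eCondProb (joint₀ x) (φ x) a' e' c *
              ((q x a e - fhat x a e) - (q x a' e' - fhat x a' e')) *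
              (w x a' e' - w x a e) := by
  rw [← sum_add_distrib, ← sum_sub_distrib, mul_sum]
  refine sum_congr rfl fun x _ => ?_
  rw [mul_left_comm, ← sum_mul_eClusterProb_div_mul_sub_sum (hjoint₀ x) (hw x) (φ x)
    (fun a e => q x a e - fhat x a e)]
  simp only [mul_sub (joint x _ _), sum_sub_distrib]
  ring

/-- Bias of OffCEM with stochastic action embeddings: under common support,
writing `Δ(x,a,e) = q(x,a,e) - f̂(x,a,e)` and `w(x,a) = π(a|x)/π₀(a|x)`
(convention `t/0 = 0`), the gap between the expectation `E` of the generalized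
OffCEM estimator on a single logged sample and the policy value `V(π)` has the
stated pairwise form. -/
theorem offcem_bias_stochastic_embeddings
    {X A E C : Type*} [Fintype X] [Fintype A] [Fintype E] [Fintype C]
    [Nonempty X] [Nonempty A] [Nonempty E] [Nonempty C] [DecidableEq C]
    (p : X → ℝ) (hp : ∀ x, 0 ≤ p x) (hpsum : ∑ x, p x = 1)
    (π₀ π : X → A → ℝ)
    (hπ₀ : ∀ x a, 0 ≤ π₀ x a) (hπ₀sum : ∀ x, ∑ a, π₀ x a = 1)
    (hπ : ∀ x a, 0 ≤ π x a) (hπsum : ∀ x, ∑ a, π x a = 1)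
    (pe : X → A → E → ℝ)
    (hpe : ∀ x a e, 0 ≤ pe x a e) (hpesum : ∀ x a, ∑ e, pe x a e = 1)
    (φ : X → E → C)
    (q fhat : X → A → E → ℝ)
    (hsupp : ∀ x a, 0 < π x a → 0 < π₀ x a) :
    ((∑ x, p x * ∑ a, ∑ e, (π₀ x a * pe x a e) *
          ((eClusterProb (fun a' e' => π x a' * pe x a' e') (φ x) (φ x e)
              / eClusterProb (fun a' e' => π₀ x a' * pe x a' e') (φ x) (φ x e))
            * (q x a e - fhat x a e)))
        + (∑ x, p x * ∑ a, ∑ e, (π x a * pe x a e) * fhat x a e))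
      - (∑ x, p x * ∑ a, ∑ e, (π x a * pe x a e) * q x a e)
      = (1 / 2) * ∑ x, p x * ∑ c,
          eClusterProb (fun a e => π₀ x a * pe x a e) (φ x) c *
            ∑ a, ∑ e, ∑ a', ∑ e',
              eCondProb (fun a'' e'' => π₀ x a'' * pe x a'' e'') (φ x) a e c *
              eCondProb (fun a'' e'' => π₀ x a'' * pe x a'' e'') (φ x) a' e' c *
              ((q x a e - fhat x a e) - (q x a' e' - fhat x a' e')) *
              (π x a' / π₀ x a' - π x a / π₀ x a) := by
  have hzero (x : X) (a : A) (h₀ : π₀ x a = 0) : π x a = 0 :=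
    le_antisymm (not_lt.1 fun hpos => (hsupp x a hpos).ne' h₀) (hπ x a)
  exact offcem_bias_stochastic_embeddings_general p
    (w := fun x a _ => π x a / π₀ x a) (fun x a e => mul_nonneg (hπ₀ x a) (hpe x a e))
    (fun x a e => by rw [mul_right_comm, mul_div_cancel_of_imp' (hzero x a)]) φ q fhat
end

section
/- (Cluster importance weight as a conditional expectation, stochastic-embedding version.) Assume common support: for all x, a, π(a|x) > 0 implies π₀(a|x) > 0, and let w(x,a) := π(a|x)/π₀(a|x) (convention t/0 = 0). Then for every x ∈ 𝒳 and c ∈ 𝒞 with π₀(c|x) > 0, w(x,c) = Σ_a Σ_e π₀(a,e|x,c) · w(x,a). -/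
open Finset

section Conditioning

variable {A E C : Type*} [Fintype A] [Fintype E] [DecidableEq C]

theorem eClusterProb_mul_eCondProb {joint : A → E → ℝ} {φ : E → C} {c : C}
    (hc : eClusterProb joint φ c ≠ 0) (a : A) (e : E) :
    eClusterProb joint φ c * eCondProb joint φ a e c = if φ e = c then joint a e else 0 := by
  rw [eCondProb, mul_div_cancel₀ _ hc, mul_ite, mul_one, mul_zero]

theorem eClusterProb_mul_sum_eCondProb_mul {joint : A → E → ℝ} {φ : E → C} {c : C}
    (hc : eClusterProb joint φ c ≠ 0) (f : A → E → ℝ) :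
    eClusterProb joint φ c * ∑ a, ∑ e, eCondProb joint φ a e c * f a e
      = eClusterProb (fun a e => joint a e * f a e) φ c := by
  calc eClusterProb joint φ c * ∑ a, ∑ e, eCondProb joint φ a e c * f a e
      = ∑ a, ∑ e, (if φ e = c then joint a e else 0) * f a e := by
        simp only [mul_sum, ← mul_assoc, eClusterProb_mul_eCondProb hc]
    _ = eClusterProb (fun a e => joint a e * f a e) φ c := by
        simp only [eClusterProb, sum_filter, ite_mul, zero_mul]

theorem cluster_weight_eq_conditional_expectation_embeddings_general
    (π₀ π : A → ℝ) (pe : A → E → ℝ) (φ : E → C) (c : C)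
    (hsupp : ∀ a, π₀ a = 0 → π a = 0)
    (hc : eClusterProb (fun a e => π₀ a * pe a e) φ c ≠ 0) :
    eClusterProb (fun a e => π a * pe a e) φ c / eClusterProb (fun a e => π₀ a * pe a e) φ c
      = ∑ a, ∑ e, eCondProb (fun a' e' => π₀ a' * pe a' e') φ a e c * (π a / π₀ a) := by
  have reweight (a : A) (e : E) : π₀ a * pe a e * (π a / π₀ a) = π a * pe a e := by
    rw [mul_right_comm, mul_div_cancel_of_imp' (hsupp a)]
  rw [div_eq_iff hc, mul_comm, eClusterProb_mul_sum_eCondProb_mul hc fun a _ => π a / π₀ a]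
  simp only [reweight]

end Conditioning

/-- Cluster importance weight as a conditional expectation of the vanilla importance weight, stochastic-embedding version: under common support, for
every `x` and cluster `c` with `π₀(c|x) > 0`,
`w(x,c) = ∑ a, ∑ e, π₀(a,e|x,c) · w(x,a)`. -/
theorem cluster_weight_eq_conditional_expectation_embeddings
    {X A E C : Type*} [Fintype X] [Fintype A] [Fintype E] [Fintype C]
    [Nonempty X] [Nonempty A] [Nonempty E] [Nonempty C] [DecidableEq C]
    (π₀ π : X → A → ℝ)
    (hπ₀ : ∀ x a, 0 ≤ π₀ x a) (hπ₀sum : ∀ x, ∑ a, π₀ x a = 1)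
    (hπ : ∀ x a, 0 ≤ π x a) (hπsum : ∀ x, ∑ a, π x a = 1)
    (pe : X → A → E → ℝ)
    (hpe : ∀ x a e, 0 ≤ pe x a e) (hpesum : ∀ x a, ∑ e, pe x a e = 1)
    (φ : X → E → C)
    (hsupp : ∀ x a, 0 < π x a → 0 < π₀ x a)
    (x : X) (c : C)
    (hc : 0 < eClusterProb (fun a e => π₀ x a * pe x a e) (φ x) c) :
    eClusterProb (fun a e => π x a * pe x a e) (φ x) c
        / eClusterProb (fun a e => π₀ x a * pe x a e) (φ x) c
      = ∑ a, ∑ e,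
          eCondProb (fun a' e' => π₀ x a' * pe x a' e') (φ x) a e c *
            (π x a / π₀ x a) :=
  cluster_weight_eq_conditional_expectation_embeddings_general (π₀ x) (π x) (pe x) (φ x) c
    (fun a h₀ => le_antisymm (not_lt.1 fun hpos => (hsupp x a hpos).ne' h₀) (hπ x a)) hc.ne'
end
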